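/- Let κ be a (P,ρ)-kernel on a locally finite weakly ranked poset (P,ρ). The Chow function ℋ satisfies: (i) ℋ_{ss}(x) = 1 for all s ∈ P; (ii) ℋ_{st}(x) = x^{ρ_{st}−1} ℋ_{st}(1/x) for all s < t; (iii) both κ·ℋ = ℋ^rev and ℋ·κ = ℋ^rev. Moreover, ℋ is the unique element H of I_ρ(P) satisfying (i), (ii), and at least one of the two identities κ·H = H^rev or H·κ = H^rev. -/

import Mathlib

/-!
The argument takes place in the incidence algebra, with `rev` multiplicative on `I_ρ(P)`.

At `x = 1` the involution `rev` is trivial, so `κ(1)` is unipotent with square `δ` and hence equals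
`δ`. Thus `κ̄` is an exact quotient, and its negative `N = -κ̄ = ℋ⁻¹` satisfies
`(x - 1) N = x δ - κ`. Substituting this for `κ` and cancelling `x - 1`, each of the equations
`κ H = x H - (x - 1) δ` and `H κ = x H - (x - 1) δ` says that `H` is inverse to `N`, so each has
`ℋ` as its only solution. On the other hand, conditions (i) and (ii) say precisely
that `H^rev = x H - (x - 1) δ`, so it only remains to see that `ℋ^rev = ℋ κ`. Reversing the
relation for `N` gives `(x - 1) N^rev = x κ^rev - δ`, whence `κ N^rev = N`; therefore
`N ℋ^rev = κ N^rev ℋ^rev = κ`, and multiplying by `ℋ` gives the claim.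
-/

open Finset Polynomial
open scoped Classical

noncomputable section

variable {α : Type*}

/-- Convolution product in the incidence algebra of a locally finite poset over `ℤ[x]`.
Only the values on intervals `s ≤ t` are relevant. -/
def conv [PartialOrder α] [LocallyFiniteOrder α] (a b : α → α → Polynomial ℤ) :
    α → α → Polynomial ℤ :=
  fun s t => ∑ w ∈ Finset.Icc s t, a s w * b w t

/-- The identity `δ` of the incidence algebra. -/
def dlt [PartialOrder α] : α → α → Polynomial ℤ :=
  fun s t => if s = t then 1 else 0

/-- The involution `a ↦ a^rev`, given by `(a^rev)_{st}(x) = x^{ρ_{st}} a_{st}(1/x)`. -/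
def rev (ρ : α → α → ℕ) (a : α → α → Polynomial ℤ) : α → α → Polynomial ℤ :=
  fun s t => (a s t).reflect (ρ s t)

/-- A weak rank function on a poset. -/
structure IsWeakRank [Preorder α] (ρ : α → α → ℕ) : Prop where
  pos : ∀ ⦃s t : α⦄, s < t → 0 < ρ s t
  add : ∀ ⦃s w t : α⦄, s ≤ w → w ≤ t → ρ s t = ρ s w + ρ w t

/-- `κ` is a `(P,ρ)`-kernel: it lies in `I_ρ(P)`, is `1` on the diagonal, and `κ⁻¹ = κ^rev`. -/
structure IsKernel [PartialOrder α] [LocallyFiniteOrder α] (ρ : α → α → ℕ)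
    (κ : α → α → Polynomial ℤ) : Prop where
  degLE : ∀ ⦃s t : α⦄, s ≤ t → (κ s t).natDegree ≤ ρ s t
  diag : ∀ s : α, κ s s = 1
  left : ∀ ⦃s t : α⦄, s ≤ t → conv (rev ρ κ) κ s t = dlt s t
  right : ∀ ⦃s t : α⦄, s ≤ t → conv κ (rev ρ κ) s t = dlt s t

/-- The reduced kernel `κ̄`: `κ̄_{st} = κ_{st}/(x-1)` for `s < t` and `κ̄_{ss} = -1`. -/
def red [PartialOrder α] (κ : α → α → Polynomial ℤ) : α → α → Polynomial ℤ :=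
  fun s t => if s = t then -1 else κ s t /ₘ (X - 1)

/-- `H` is the Chow function of `κ`, i.e. `H = -(κ̄)⁻¹`. -/
structure IsChow [PartialOrder α] [LocallyFiniteOrder α] (κ H : α → α → Polynomial ℤ) : Prop where
  left : ∀ ⦃s t : α⦄, s ≤ t → conv (red κ) H s t = -dlt s t
  right : ∀ ⦃s t : α⦄, s ≤ t → conv H (red κ) s t = -dlt s t

/-- `f` is the right KLS function of the kernel `κ`. -/
structure IsRightKLS [PartialOrder α] [LocallyFiniteOrder α] (ρ : α → α → ℕ)
    (κ f : α → α → Polynomial ℤ) : Prop where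
  diag : ∀ s : α, f s s = 1
  degLT : ∀ ⦃s t : α⦄, s < t → 2 * (f s t).natDegree < ρ s t
  rev_eq : ∀ ⦃s t : α⦄, s ≤ t → rev ρ f s t = conv κ f s t

/-- `g` is the left KLS function of the kernel `κ`. -/
structure IsLeftKLS [PartialOrder α] [LocallyFiniteOrder α] (ρ : α → α → ℕ)
    (κ g : α → α → Polynomial ℤ) : Prop where
  diag : ∀ s : α, g s s = 1
  degLT : ∀ ⦃s t : α⦄, s < t → 2 * (g s t).natDegree < ρ s t
  rev_eq : ∀ ⦃s t : α⦄, s ≤ t → rev ρ g s t = conv g κ s t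

/-- `p` is symmetric with center of symmetry `d/2`, i.e. `p(x) = x^d p(1/x)`. -/
def PolySymm (d : ℕ) (p : Polynomial ℤ) : Prop := p.natDegree ≤ d ∧ p.reflect d = p

/-- All coefficients of `p` are non-negative. -/
def PolyNonneg (p : Polynomial ℤ) : Prop := ∀ n, 0 ≤ p.coeff n

/-- The coefficient sequence of `p` is unimodal. -/
def PolyUnimodal (p : Polynomial ℤ) : Prop :=
  ∃ j, (∀ i < j, p.coeff i ≤ p.coeff (i + 1)) ∧ ∀ i, j ≤ i → p.coeff (i + 1) ≤ p.coeff i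

end

section Reflection

lemma X_sub_one_ne_zero {R : Type*} [Ring R] [Nontrivial R] : (X - 1 : R[X]) ≠ 0 := by
  simpa using X_sub_C_ne_zero (1 : R)

variable {R : Type*} [Semiring R]

lemma reflect_zero_eq_self (p : R[X]) : p.reflect 0 = p := by
  ext i
  cases i <;> simp [coeff_reflect, revAt]

lemma reflect_finsetSum {ι : Type*} (S : Finset ι) (f : ι → R[X]) (n : ℕ) :
    (∑ i ∈ S, f i).reflect n = ∑ i ∈ S, (f i).reflect n :=
  map_sum (⟨⟨reflect n, reflect_zero⟩, fun p q => reflect_add p q n⟩ : R[X] →+ R[X]) f S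

lemma reflect_succ {n : ℕ} {p : R[X]} (hp : p.natDegree ≤ n) :
    p.reflect (n + 1) = X * p.reflect n := by
  simpa [add_comm] using reflect_mul 1 p (F := 1) (by simp) hp

lemma reflect_succ_X_mul {n : ℕ} {p : R[X]} (hp : p.natDegree ≤ n) :
    (X * p).reflect (n + 1) = p.reflect n := by
  simpa [add_comm] using reflect_mul X p natDegree_X_le hp

lemma eval_one_reflect {R : Type*} [CommSemiring R] {n : ℕ} {p : R[X]} (hp : p.natDegree ≤ n) :
    (p.reflect n).eval 1 = p.eval 1 := by
  let _ : Invertible (1 : R) := invertibleOne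
  simpa [eval₂_eq_eval_map] using eval₂_reflect_mul_pow (RingHom.id R) 1 n p hp

lemma polySymm_pred_iff {r : ℕ} (hr : 0 < r) {p : ℤ[X]} (hp : p.natDegree ≤ r) :
    PolySymm (r - 1) p ↔ p.reflect r = X * p := by
  obtain ⟨n, rfl⟩ := Nat.exists_eq_add_one.2 hr
  rw [Nat.add_sub_cancel]
  constructor
  · rintro ⟨hdeg, hsymm⟩
    rw [reflect_succ hdeg, hsymm]
  · intro h
    -- The coefficient of `x ^ (n + 1)` in `p` is the constant term of its reflection `X * p`.
    have htop : p.coeff (n + 1) = 0 := by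
      simpa [coeff_reflect] using congrArg (coeff · 0) h
    have hdeg : p.natDegree ≤ n := natDegree_le_pred hp htop
    exact ⟨hdeg, mul_left_cancel₀ X_ne_zero ((reflect_succ hdeg).symm.trans h)⟩

end Reflection

section IncidenceAlgebra

variable {α : Type*}

instance {R S : Type*} [Preorder α] [Semiring R] [AddCommMonoid S] [Module R S]
    [Module.IsTorsionFree R S] : Module.IsTorsionFree R (IncidenceAlgebra S α) :=
  DFunLike.coe_injective.moduleIsTorsionFree _ IncidenceAlgebra.coe_constSMul

lemma eq_one_of_diag_eq_one_of_mul_self_eq_one {R : Type*} [Ring R] [IsAddTorsionFree R]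
    [PartialOrder α] [LocallyFiniteOrder α] [DecidableEq α] {f : IncidenceAlgebra R α}
    (hdiag : ∀ s, f s s = 1) (hf : f * f = 1) : f = 1 := by
  ext s t hst
  induction hn : #(Icc s t) using Nat.strong_induction_on generalizing t with
  | _ n ih =>
    rcases hst.eq_or_lt with rfl | hlt
    · rw [hdiag, IncidenceAlgebra.one_apply, if_pos rfl]
    have hmiddle : ∀ w ∈ Icc s t, w ≠ s ∧ w ≠ t → f s w * f w t = 0 := by
      rintro w hw ⟨hws, hwt⟩
      obtain ⟨hsw, hwt'⟩ := mem_Icc.1 hw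
      have hcard : #(Icc s w) < n :=
        hn ▸ card_lt_card (Icc_ssubset_Icc_right hst le_rfl (hwt'.lt_of_ne hwt))
      rw [ih _ hcard _ hsw rfl, IncidenceAlgebra.one_apply, if_neg hws.symm, zero_mul]
    have htwo : f s t + f s t = 0 := by
      calc f s t + f s t = (f * f) s t := by
            rw [IncidenceAlgebra.mul_apply, sum_eq_add_of_mem s t (left_mem_Icc.2 hst)
              (right_mem_Icc.2 hst) hlt.ne hmiddle, hdiag, hdiag, one_mul, mul_one]
        _ = 0 := by rw [hf, IncidenceAlgebra.one_apply, if_neg hlt.ne]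
    rw [IncidenceAlgebra.one_apply, if_neg hlt.ne]
    exact self_eq_neg.1 (eq_neg_of_add_eq_zero_left htwo)

/-- The element of Mathlib's incidence algebra with the same values as `a` on intervals; the
values of `a` off the order relation are discarded. -/
noncomputable def toInc {R : Type*} [Semiring R] [Preorder α] :
    (α → α → R) →ₗ[R] IncidenceAlgebra R α where
  toFun a := ⟨fun s t => if s ≤ t then a s t else 0, fun _ _ h => if_neg h⟩
  map_add' a b := by
    ext s t hst
    simp [IncidenceAlgebra.add_apply, hst]
  map_smul' c a := by
    ext s t hst
    simp [IncidenceAlgebra.constSMul_apply, hst]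

lemma toInc_apply_of_le {R : Type*} [Semiring R] [Preorder α] (a : α → α → R) {s t : α}
    (hst : s ≤ t) : toInc a s t = a s t :=
  if_pos hst

lemma toInc_inj {R : Type*} [Semiring R] [Preorder α] {a b : α → α → R} :
    toInc a = toInc b ↔ ∀ s t, s ≤ t → a s t = b s t := by
  refine ⟨fun h s t hst => ?_, fun h => ?_⟩
  · rw [← toInc_apply_of_le a hst, h, toInc_apply_of_le b hst]
  · ext s t hst
    rw [toInc_apply_of_le a hst, toInc_apply_of_le b hst, h s t hst]

variable [PartialOrder α]

lemma toInc_dlt : toInc (dlt : α → α → ℤ[X]) = 1 := by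
  ext1 s t hst
  rw [toInc_apply_of_le _ hst, IncidenceAlgebra.one_apply, dlt]

lemma toInc_conv [LocallyFiniteOrder α] (a b : α → α → ℤ[X]) :
    toInc (conv a b) = toInc a * toInc b := by
  ext1 s t hst
  rw [toInc_apply_of_le _ hst, IncidenceAlgebra.mul_apply]
  refine sum_congr rfl fun w hw => ?_
  obtain ⟨hsw, hwt⟩ := mem_Icc.1 hw
  rw [toInc_apply_of_le _ hsw, toInc_apply_of_le _ hwt]

lemma toInc_mul_toInc_eq_one_iff [LocallyFiniteOrder α] {a b : α → α → ℤ[X]} :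
    toInc a * toInc b = 1 ↔ ∀ s t, s ≤ t → conv a b s t = dlt s t := by
  rw [← toInc_conv, ← toInc_dlt, toInc_inj]

end IncidenceAlgebra

section RankBounded

variable {α : Type*} {ρ : α → α → ℕ} {a b : α → α → ℤ[X]}

/-- Membership in the subalgebra `I_ρ(P)` of the incidence algebra. -/
def IsRankBounded [LE α] (ρ : α → α → ℕ) (a : α → α → ℤ[X]) : Prop :=
  ∀ ⦃s t : α⦄, s ≤ t → (a s t).natDegree ≤ ρ s t

lemma IsWeakRank.rank_self [Preorder α] (hρ : IsWeakRank ρ) (s : α) : ρ s s = 0 := by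
  simpa using hρ.add (le_refl s) (le_refl s)

variable [PartialOrder α]

lemma isRankBounded_dlt : IsRankBounded ρ (dlt : α → α → ℤ[X]) := by
  intro s t _
  rw [dlt]
  split_ifs <;> simp

lemma IsRankBounded.neg_red (ha : IsRankBounded ρ a) : IsRankBounded ρ (-red a) := by
  intro s t hst
  rw [Pi.neg_apply, Pi.neg_apply, natDegree_neg, red]
  split_ifs
  · simp
  · exact (natDegree_le_natDegree (degree_divByMonic_le _ _)).trans (ha hst)

lemma IsWeakRank.rev_dlt (hρ : IsWeakRank ρ) (s t : α) : rev ρ dlt s t = dlt s t := by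
  rw [rev, dlt]
  split_ifs with hst
  · rw [hst, hρ.rank_self, reflect_zero_eq_self]
  · exact reflect_zero

lemma IsWeakRank.rev_conv [LocallyFiniteOrder α] (hρ : IsWeakRank ρ) (ha : IsRankBounded ρ a)
    (hb : IsRankBounded ρ b) : rev ρ (conv a b) = conv (rev ρ a) (rev ρ b) := by
  funext s t
  rw [rev, conv, reflect_finsetSum]
  refine sum_congr rfl fun w hw => ?_
  obtain ⟨hsw, hwt⟩ := mem_Icc.1 hw
  rw [hρ.add hsw hwt, reflect_mul _ _ (ha hsw) (hb hwt), rev, rev]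

lemma IsWeakRank.toInc_rev_mul_toInc_rev_eq_one [LocallyFiniteOrder α] (hρ : IsWeakRank ρ)
    (ha : IsRankBounded ρ a) (hb : IsRankBounded ρ b) (hab : toInc a * toInc b = 1) :
    toInc (rev ρ a) * toInc (rev ρ b) = 1 := by
  rw [toInc_mul_toInc_eq_one_iff] at hab ⊢
  intro s t hst
  rw [← hρ.rev_conv ha hb, rev, hab s t hst]
  exact hρ.rev_dlt s t

lemma IsRankBounded.of_conv [LocallyFiniteOrder α] (hρ : IsWeakRank ρ) (ha : IsRankBounded ρ a)
    (hdiag : ∀ s, a s s ≠ 0) (hab : IsRankBounded ρ (conv a b)) : IsRankBounded ρ b := by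
  intro s t hst
  induction hn : ρ s t using Nat.strong_induction_on generalizing s with
  | _ n ih =>
    have hsplit : b s t * a s s = conv a b s t - ∑ w ∈ Ioc s t, a s w * b w t := by
      rw [conv, Icc_eq_cons_Ioc hst, sum_cons]
      ring
    have hterm : ∀ w ∈ Ioc s t, (a s w * b w t).natDegree ≤ n := by
      intro w hw
      obtain ⟨hsw, hwt⟩ := mem_Ioc.1 hw
      have hpos := hρ.pos hsw
      have hadd := hρ.add hsw.le hwt
      have hbw := ih (ρ w t) (by omega) hwt rfl
      exact (natDegree_mul_le_of_le (ha hsw.le) hbw).trans (by omega)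
    calc (b s t).natDegree ≤ (b s t * a s s).natDegree :=
          natDegree_le_natDegree (degree_le_mul_left _ (hdiag s))
      _ ≤ n := by
          rw [hsplit]
          exact natDegree_sub_le_of_le (hn ▸ hab hst) (natDegree_sum_le_of_forall_le _ _ hterm)
            |>.trans_eq (max_self n)

lemma toInc_rev_eq_iff (hρ : IsWeakRank ρ) (ha : IsRankBounded ρ a) :
    toInc (rev ρ a) = (X : ℤ[X]) • toInc a - (X - 1 : ℤ[X]) • 1 ↔
      (∀ s, a s s = 1) ∧ ∀ s t, s < t → PolySymm (ρ s t - 1) (a s t) := by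
  have hdiag (s : α) : (a s s).reflect (ρ s s) = X * a s s - (X - 1) * dlt s s ↔ a s s = 1 := by
    rw [hρ.rank_self, reflect_zero_eq_self, dlt, if_pos rfl]
    refine ⟨fun h => mul_left_cancel₀ X_sub_one_ne_zero ?_, fun h => ?_⟩
    · linear_combination -h
    · rw [h]
      ring
  have hoff {s t : α} (hst : s < t) :
      (a s t).reflect (ρ s t) = X * a s t - (X - 1) * dlt s t ↔ PolySymm (ρ s t - 1) (a s t) := by
    rw [polySymm_pred_iff (hρ.pos hst) (ha hst.le), dlt, if_neg hst.ne, mul_zero, sub_zero]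
  rw [← toInc_dlt, ← map_smul, ← map_smul, ← map_sub, toInc_inj]
  constructor
  · exact fun h => ⟨fun s => (hdiag s).1 (h s s le_rfl), fun s t hst => (hoff hst).1 (h s t hst.le)⟩
  · rintro ⟨hone, hsymm⟩ s t hst
    rcases hst.eq_or_lt with rfl | hlt
    · exact (hdiag s).2 (hone s)
    · exact (hoff hlt).2 (hsymm s t hlt)

end RankBounded

section Kernel

variable {α : Type*} [PartialOrder α] [LocallyFiniteOrder α] {ρ : α → α → ℕ}
  {κ : α → α → ℤ[X]}

lemma IsKernel.eval_one (hκ : IsKernel ρ κ) {s t : α} (hst : s ≤ t) :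
    (κ s t).eval 1 = if s = t then 1 else 0 := by
  let κ₁ : IncidenceAlgebra ℤ α := toInc fun s t => (κ s t).eval 1
  have hdiag (s : α) : κ₁ s s = 1 := by
    simp [κ₁, toInc_apply_of_le _ le_rfl, hκ.diag]
  have hsq : κ₁ * κ₁ = 1 := by
    ext s t hst
    calc (κ₁ * κ₁) s t = (conv κ (rev ρ κ) s t).eval 1 := by
          rw [IncidenceAlgebra.mul_apply, conv, eval_finsetSum]
          refine sum_congr rfl fun w hw => ?_
          obtain ⟨hsw, hwt⟩ := mem_Icc.1 hw
          rw [eval_mul, rev, eval_one_reflect (hκ.degLE hwt), toInc_apply_of_le _ hsw,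
            toInc_apply_of_le _ hwt]
      _ = (1 : IncidenceAlgebra ℤ α) s t := by
          rw [hκ.right hst, dlt, apply_ite (eval 1), Polynomial.eval_one, eval_zero,
            IncidenceAlgebra.one_apply]
  rw [← toInc_apply_of_le (fun s t => (κ s t).eval 1) hst, ← IncidenceAlgebra.one_apply]
  have hone : κ₁ = 1 := eq_one_of_diag_eq_one_of_mul_self_eq_one hdiag hsq
  exact congrArg (fun f : IncidenceAlgebra ℤ α => f s t) hone

lemma IsKernel.X_sub_one_mul_red (hκ : IsKernel ρ κ) {s t : α} (hst : s ≤ t) :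
    (X - 1) * red κ s t = κ s t - X * dlt s t := by
  rcases hst.eq_or_lt with rfl | hlt
  · rw [red, dlt, if_pos rfl, if_pos rfl, hκ.diag]
    ring
  · have hroot : (κ s t).IsRoot 1 := (hκ.eval_one hst).trans (if_neg hlt.ne)
    have hdiv : (X - C 1) * (κ s t /ₘ (X - C 1)) = κ s t := mul_divByMonic_eq_iff_isRoot.2 hroot
    rw [red, dlt, if_neg hlt.ne, if_neg hlt.ne, ← C_1, hdiv, mul_zero, sub_zero]

lemma IsKernel.smul_neg_red (hκ : IsKernel ρ κ) :
    (X - 1 : ℤ[X]) • toInc (-red κ) = (X : ℤ[X]) • 1 - toInc κ := by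
  rw [← toInc_dlt, ← map_smul, ← map_smul, ← map_sub, toInc_inj]
  intro s t hst
  simp only [Pi.smul_apply, Pi.neg_apply, Pi.sub_apply, smul_eq_mul]
  linear_combination -hκ.X_sub_one_mul_red hst

lemma IsKernel.toInc_eq_sub (hκ : IsKernel ρ κ) :
    toInc κ = (X : ℤ[X]) • 1 - (X - 1 : ℤ[X]) • toInc (-red κ) := by
  rw [hκ.smul_neg_red, sub_sub_cancel]

lemma IsKernel.smul_rev_neg_red (hρ : IsWeakRank ρ) (hκ : IsKernel ρ κ) :
    (X - 1 : ℤ[X]) • toInc (rev ρ (-red κ)) = (X : ℤ[X]) • toInc (rev ρ κ) - 1 := by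
  rw [← toInc_dlt, ← map_smul, ← map_smul, ← map_sub, toInc_inj]
  intro s t hst
  have hdeg : ((-red κ) s t).natDegree ≤ ρ s t := IsRankBounded.neg_red hκ.degLE hst
  have hrel : X * (-red κ) s t - (-red κ) s t = X * dlt s t - κ s t := by
    rw [Pi.neg_apply, Pi.neg_apply]
    linear_combination -hκ.X_sub_one_mul_red hst
  -- Reflecting in degree `ρ + 1` rather than `ρ` exchanges the coefficients `x` and `1`.
  have hreflect := congrArg (reflect (ρ s t + 1)) hrel
  rw [reflect_sub, reflect_sub, reflect_succ_X_mul hdeg, reflect_succ hdeg,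
    reflect_succ_X_mul (isRankBounded_dlt hst), reflect_succ (hκ.degLE hst)] at hreflect
  have hdlt : (dlt s t).reflect (ρ s t) = dlt s t := hρ.rev_dlt s t
  simp only [Pi.smul_apply, Pi.sub_apply, smul_eq_mul, rev]
  linear_combination -hreflect - hdlt

lemma IsKernel.mul_rev_neg_red (hρ : IsWeakRank ρ) (hκ : IsKernel ρ κ) :
    toInc κ * toInc (rev ρ (-red κ)) = toInc (-red κ) := by
  have hinv : toInc κ * toInc (rev ρ κ) = 1 :=
    toInc_mul_toInc_eq_one_iff.2 fun _ _ hst => hκ.right hst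
  refine smul_right_injective _ (X_sub_one_ne_zero (R := ℤ)) ?_
  beta_reduce
  rw [← mul_smul_comm, hκ.smul_rev_neg_red hρ, mul_sub, mul_smul_comm, hinv, mul_one,
    hκ.smul_neg_red]

end Kernel

section Chow

variable {α : Type*} [PartialOrder α] [LocallyFiniteOrder α] {ρ : α → α → ℕ}
  {κ H : α → α → ℤ[X]}

lemma IsChow.neg_red_mul (hH : IsChow κ H) : toInc (-red κ) * toInc H = 1 := by
  refine toInc_mul_toInc_eq_one_iff.2 fun s t hst => ?_
  rw [← neg_eq_iff_eq_neg.2 (hH.left hst)]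
  simp [conv]

lemma IsChow.mul_neg_red (hH : IsChow κ H) : toInc H * toInc (-red κ) = 1 := by
  refine toInc_mul_toInc_eq_one_iff.2 fun s t hst => ?_
  rw [← neg_eq_iff_eq_neg.2 (hH.right hst)]
  simp [conv]

lemma IsChow.isRankBounded (hρ : IsWeakRank ρ) (hκ : IsRankBounded ρ κ) (hH : IsChow κ H) :
    IsRankBounded ρ H := by
  refine IsRankBounded.of_conv hρ hκ.neg_red (fun s => by simp [red]) fun s t hst => ?_
  rw [toInc_mul_toInc_eq_one_iff.1 hH.neg_red_mul s t hst]
  exact isRankBounded_dlt hst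

lemma IsChow.toInc_rev_eq_mul_kernel (hρ : IsWeakRank ρ) (hκ : IsKernel ρ κ) (hH : IsChow κ H) :
    toInc (rev ρ H) = toInc H * toInc κ := by
  have hrev : toInc (rev ρ (-red κ)) * toInc (rev ρ H) = 1 :=
    hρ.toInc_rev_mul_toInc_rev_eq_one (IsRankBounded.neg_red hκ.degLE)
      (hH.isRankBounded hρ hκ.degLE) hH.neg_red_mul
  calc toInc (rev ρ H) = toInc H * (toInc (-red κ) * toInc (rev ρ H)) := by
        rw [← mul_assoc, hH.mul_neg_red, one_mul]
    _ = toInc H * (toInc κ * (toInc (rev ρ (-red κ)) * toInc (rev ρ H))) := by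
        rw [← hκ.mul_rev_neg_red hρ, mul_assoc]
    _ = toInc H * toInc κ := by rw [hrev, mul_one]

lemma IsChow.kernel_mul_eq_iff (hκ : IsKernel ρ κ) (hH : IsChow κ H)
    {G : IncidenceAlgebra ℤ[X] α} :
    toInc κ * G = (X : ℤ[X]) • G - (X - 1 : ℤ[X]) • 1 ↔ G = toInc H := by
  rw [hκ.toInc_eq_sub, sub_mul, smul_mul_assoc, smul_mul_assoc, one_mul, sub_right_inj,
    (smul_right_injective _ (X_sub_one_ne_zero (R := ℤ))).eq_iff]
  refine ⟨fun h => (left_inv_eq_right_inv hH.mul_neg_red h).symm, ?_⟩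
  rintro rfl
  exact hH.neg_red_mul

lemma IsChow.mul_kernel_eq_iff (hκ : IsKernel ρ κ) (hH : IsChow κ H)
    {G : IncidenceAlgebra ℤ[X] α} :
    G * toInc κ = (X : ℤ[X]) • G - (X - 1 : ℤ[X]) • 1 ↔ G = toInc H := by
  rw [hκ.toInc_eq_sub, mul_sub, mul_smul_comm, mul_smul_comm, mul_one, sub_right_inj,
    (smul_right_injective _ (X_sub_one_ne_zero (R := ℤ))).eq_iff]
  refine ⟨fun h => left_inv_eq_right_inv h hH.neg_red_mul, ?_⟩
  rintro rfl
  exact hH.mul_neg_red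

end Chow

/-- Proposition 3.5: the Chow function `ℋ` of a kernel `κ` satisfies (i) `ℋ_{ss} = 1`,
(ii) symmetry with center `(ρ_{st}-1)/2`, (iii) `κℋ = ℋ^rev` and `ℋκ = ℋ^rev`; moreover `ℋ` is
the unique element of `I_ρ(P)` satisfying (i), (ii) and at least one of the identities in (iii). -/
theorem chow_characterization [PartialOrder α] [LocallyFiniteOrder α]
    (ρ : α → α → ℕ) (hρ : IsWeakRank ρ)
    (κ : α → α → Polynomial ℤ) (hκ : IsKernel ρ κ)
    (H : α → α → Polynomial ℤ) (hH : IsChow κ H) :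
    ((∀ s : α, H s s = 1) ∧
     (∀ s t : α, s < t → PolySymm (ρ s t - 1) (H s t)) ∧
     (∀ s t : α, s ≤ t → conv κ H s t = rev ρ H s t) ∧
     (∀ s t : α, s ≤ t → conv H κ s t = rev ρ H s t)) ∧
    (∀ H' : α → α → Polynomial ℤ,
      (∀ s t : α, s ≤ t → (H' s t).natDegree ≤ ρ s t) →
      (∀ s : α, H' s s = 1) →
      (∀ s t : α, s < t → PolySymm (ρ s t - 1) (H' s t)) →
      ((∀ s t : α, s ≤ t → conv κ H' s t = rev ρ H' s t) ∨
       (∀ s t : α, s ≤ t → conv H' κ s t = rev ρ H' s t)) →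
      ∀ s t : α, s ≤ t → H' s t = H s t) := by
  have hbdd := hH.isRankBounded hρ hκ.degLE
  have hleft := (hH.kernel_mul_eq_iff hκ).2 rfl
  have hright := (hH.mul_kernel_eq_iff hκ).2 rfl
  have hrev := (hH.toInc_rev_eq_mul_kernel hρ hκ).trans hright
  obtain ⟨hdiag, hsymm⟩ := (toInc_rev_eq_iff hρ hbdd).1 hrev
  refine ⟨⟨hdiag, hsymm, ?_, ?_⟩, fun H' hbdd' hdiag' hsymm' hker => ?_⟩
  · rw [← toInc_inj, toInc_conv, hleft, hrev]
  · rw [← toInc_inj, toInc_conv, hright, hrev]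
  · have hrev' := (toInc_rev_eq_iff hρ hbdd').2 ⟨hdiag', hsymm'⟩
    rw [← toInc_inj, ← toInc_inj, toInc_conv, toInc_conv, hrev'] at hker
    exact toInc_inj.1 (hker.elim (hH.kernel_mul_eq_iff hκ).1 (hH.mul_kernel_eq_iff hκ).1)
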